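/- arXiv:2601.00995 — 5 statements merged into one kernel-verified Lean document; each statement's English description precedes it below -/
import Mathlib

section
/- Darwen's Theorem for grain ordering (record model): Let S1, S2, S3, S4 be field sets. If there exists a function from records over S1 to records over S2 and a function from records over S3 to records over S4, then there exists a function from records over S1 ∪ (S3 \ S2) to records over S2 ∪ S4. -/
/-- Darwen's Theorem for grain ordering (record model). -/
theorem darwen_theorem {Attr : Type*} {V : Attr → Type*}
    (S1 S2 S3 S4 : Set Attr) :
    Nonempty (((a : ↥S1) → V a) → ((a : ↥S2) → V a)) →
    Nonempty (((a : ↥S3) → V a) → ((a : ↥S4) → V a)) →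
    Nonempty (((a : ↥(S1 ∪ (S3 \ S2))) → V a) → ((a : ↥(S2 ∪ S4)) → V a)) := by
  classical
  rintro ⟨f⟩ ⟨g⟩
  refine ⟨fun r => ?_⟩
  let r2 : (a : ↥S2) → V a := f fun a => r ⟨a, Or.inl a.2⟩
  let r4 : (a : ↥S4) → V a := g fun a =>
    if h : (a : Attr) ∈ S2 then r2 ⟨a, h⟩ else r ⟨a, Or.inr ⟨a.2, h⟩⟩
  exact fun a => if h : (a : Attr) ∈ S2 then r2 ⟨a, h⟩ else r4 ⟨a, a.2.resolve_left h⟩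
end

section
/- Grain Inference for Equi-Joins, Case A (uniqueness): Let S1, S2, Jk be field sets with Jk ⊆ S1 and Jk ⊆ S2, let K1 ⊆ S1 be a grain of a collection D1 over S1, and let K2 ⊆ S2 be a grain of a collection D2 over S2. Assume the Jk-portions of the grains are comparable: K1 ∩ Jk ⊆ K2 ∩ Jk or K2 ∩ Jk ⊆ K1 ∩ Jk. Then the map sending a join pair (r1, r2) to the triple consisting of the restriction of r1 to K1 \ Jk, the restriction of r2 to K2 \ Jk, and the restriction of r1 to K1 ∩ K2 ∩ Jk, is injective on the equi-join of D1 and D2 on Jk; that is, the fields (K1 \ Jk) ∪ (K2 \ Jk) ∪ (K1 ∩ K2 ∩ Jk) uniquely identify the elements of the join result. -/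
/-- Restriction of a record over `S` to a subset `T ⊆ S`. -/
def restr {Attr : Type*} {V : Attr → Type*} {S T : Set Attr} (h : T ⊆ S)
    (r : (a : ↥S) → V a) : (a : ↥T) → V a :=
  fun a => r ⟨a.1, h a.2⟩

/-- The equi-join of collections `D1` over `S1` and `D2` over `S2` on a common
field set `Jk`. -/
def equiJoin {Attr : Type*} {V : Attr → Type*} {S1 S2 Jk : Set Attr}
    (hJ1 : Jk ⊆ S1) (hJ2 : Jk ⊆ S2)
    (D1 : Set ((a : ↥S1) → V a)) (D2 : Set ((a : ↥S2) → V a)) :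
    Set (((a : ↥S1) → V a) × ((a : ↥S2) → V a)) :=
  {p | p.1 ∈ D1 ∧ p.2 ∈ D2 ∧ restr hJ1 p.1 = restr hJ2 p.2}

/-- Records over `S` that agree on `K \ J` and on every attribute of `K ∩ J` agree on `K`. -/
theorem restr_eq_of_diff_of_inter {Attr : Type*} {V : Attr → Type*} {S J K : Set Attr}
    (hK : K ⊆ S) {r s : (a : ↥S) → V a}
    (hdiff : restr (show K \ J ⊆ S from Set.sdiff_subset.trans hK) r =
      restr (show K \ J ⊆ S from Set.sdiff_subset.trans hK) s)
    (hinter : ∀ a (ha : a ∈ K), a ∈ J → r ⟨a, hK ha⟩ = s ⟨a, hK ha⟩) :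
    restr hK r = restr hK s := by
  funext ⟨a, ha⟩
  by_cases haJ : a ∈ J
  · exact hinter a ha haJ
  · exact congrFun hdiff ⟨a, ha, haJ⟩

/-- Grain Inference for Equi-Joins, Case A (uniqueness): when the `Jk`-portions of the
grains are comparable, the fields `(K1 \ Jk) ∪ (K2 \ Jk) ∪ (K1 ∩ K2 ∩ Jk)` uniquely
identify equi-join results. -/
theorem equijoin_grain_caseA {Attr : Type*} {V : Attr → Type*}
    {S1 S2 Jk K1 K2 : Set Attr}
    (hJ1 : Jk ⊆ S1) (hJ2 : Jk ⊆ S2) (hK1 : K1 ⊆ S1) (hK2 : K2 ⊆ S2)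
    {D1 : Set ((a : ↥S1) → V a)} {D2 : Set ((a : ↥S2) → V a)}
    (hg1 : Set.InjOn (restr hK1) D1) (hg2 : Set.InjOn (restr hK2) D2)
    (hcomp : K1 ∩ Jk ⊆ K2 ∩ Jk ∨ K2 ∩ Jk ⊆ K1 ∩ Jk) :
    Set.InjOn
      (fun p : ((a : ↥S1) → V a) × ((a : ↥S2) → V a) =>
        (restr (show K1 \ Jk ⊆ S1 from Set.diff_subset.trans hK1) p.1,
         restr (show K2 \ Jk ⊆ S2 from Set.diff_subset.trans hK2) p.2,
         restr (show K1 ∩ K2 ∩ Jk ⊆ S1 from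
           (Set.inter_subset_left.trans Set.inter_subset_left).trans hK1) p.1))
      (equiJoin hJ1 hJ2 D1 D2) := by
  rintro ⟨r1, r2⟩ ⟨hr1, hr2, hr⟩ ⟨s1, s2⟩ ⟨hs1, hs2, hs⟩ heq
  obtain ⟨h1, h2, h3⟩ : _ ∧ _ ∧ _ := by simpa only [Prod.mk.injEq] using heq
  rcases hcomp with hsub | hsub
  · obtain rfl : r1 = s1 := hg1 hr1 hs1 <| restr_eq_of_diff_of_inter hK1 h1
      fun a ha haJ => congrFun h3 ⟨a, ⟨ha, (hsub ⟨ha, haJ⟩).1⟩, haJ⟩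
    obtain rfl : r2 = s2 := hg2 hr2 hs2 <| restr_eq_of_diff_of_inter hK2 h2
      fun a _ haJ => congrFun (hr.symm.trans hs) ⟨a, haJ⟩
    rfl
  · obtain rfl : r2 = s2 := hg2 hr2 hs2 <| restr_eq_of_diff_of_inter hK2 h2
      fun a ha haJ => (congrFun hr ⟨a, haJ⟩).symm.trans <|
        (congrFun h3 ⟨a, ⟨(hsub ⟨ha, haJ⟩).1, ha⟩, haJ⟩).trans (congrFun hs ⟨a, haJ⟩)
    obtain rfl : r1 = s1 := hg1 hr1 hs1 <| restr_eq_of_diff_of_inter hK1 h1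
      fun a _ haJ => congrFun (hr.trans hs.symm) ⟨a, haJ⟩
    rfl
end

section
/- Grain Inference for Equi-Joins, Case B (uniqueness): Let S1, S2, Jk be field sets with Jk ⊆ S1 and Jk ⊆ S2, let K1 ⊆ S1 be a grain of a collection D1 over S1, and let K2 ⊆ S2 be a grain of a collection D2 over S2. Then, without any comparability hypothesis on the Jk-portions, the map sending a join pair (r1, r2) to the triple consisting of the restriction of r1 to K1 \ Jk, the restriction of r2 to K2 \ Jk, and the restriction of r1 to (K1 ∪ K2) ∩ Jk, is injective on the equi-join of D1 and D2 on Jk; that is, the fields (K1 \ Jk) ∪ (K2 \ Jk) ∪ ((K1 ∪ K2) ∩ Jk) uniquely identify the elements of the join result. -/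
/-- Grain Inference for Equi-Joins, Case B (uniqueness): without any comparability
hypothesis on the `Jk`-portions, the fields `(K1 \ Jk) ∪ (K2 \ Jk) ∪ ((K1 ∪ K2) ∩ Jk)`
uniquely identify equi-join results. -/
theorem equijoin_grain_caseB {Attr : Type*} {V : Attr → Type*}
    {S1 S2 Jk K1 K2 : Set Attr}
    (hJ1 : Jk ⊆ S1) (hJ2 : Jk ⊆ S2) (hK1 : K1 ⊆ S1) (hK2 : K2 ⊆ S2)
    {D1 : Set ((a : ↥S1) → V a)} {D2 : Set ((a : ↥S2) → V a)}
    (hg1 : Set.InjOn (restr hK1) D1) (hg2 : Set.InjOn (restr hK2) D2) :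
    Set.InjOn
      (fun p : ((a : ↥S1) → V a) × ((a : ↥S2) → V a) =>
        (restr (show K1 \ Jk ⊆ S1 from Set.diff_subset.trans hK1) p.1,
         restr (show K2 \ Jk ⊆ S2 from Set.diff_subset.trans hK2) p.2,
         restr (show (K1 ∪ K2) ∩ Jk ⊆ S1 from Set.inter_subset_right.trans hJ1) p.1))
      (equiJoin hJ1 hJ2 D1 D2) := by
  rintro ⟨r1, r2⟩ ⟨hr1, hr2, hr⟩ ⟨s1, s2⟩ ⟨hs1, hs2, hs⟩ h
  simp only [Prod.mk.injEq] at h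
  obtain ⟨h1, h2, hJ⟩ := h
  have e1 : r1 = s1 := by
    refine hg1 hr1 hs1 (funext fun ⟨a, ha⟩ => ?_)
    by_cases haJ : a ∈ Jk
    · exact congrFun hJ ⟨a, Or.inl ha, haJ⟩
    · exact congrFun h1 ⟨a, ha, haJ⟩
  have e2 : r2 = s2 := by
    refine hg2 hr2 hs2 (funext fun ⟨a, ha⟩ => ?_)
    by_cases haJ : a ∈ Jk
    · exact (congrFun hr ⟨a, haJ⟩).symm.trans
        ((congrFun hJ ⟨a, Or.inr ha, haJ⟩).trans (congrFun hs ⟨a, haJ⟩))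
    · exact congrFun h2 ⟨a, ha, haJ⟩
  rw [e1, e2]
end

section
/- Natural Join Corollary, Case A (uniqueness): Let S1 and S2 be field sets, let K1 ⊆ S1 be a grain of a collection D1 over S1, and let K2 ⊆ S2 be a grain of a collection D2 over S2. Consider the natural join, i.e., the equi-join on Jk = S1 ∩ S2. Assume K1 ∩ S2 ⊆ K2 ∩ S1 or K2 ∩ S1 ⊆ K1 ∩ S2. Then the map sending a join pair (r1, r2) to the triple consisting of the restriction of r1 to K1 \ S2, the restriction of r2 to K2 \ S1, and the restriction of r1 to K1 ∩ K2, is injective on the natural join of D1 and D2; that is, the fields (K1 \ S2) ∪ (K2 \ S1) ∪ (K1 ∩ K2) uniquely identify natural-join results. -/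
/-- The natural join of collections `D1` over `S1` and `D2` over `S2`:
the equi-join on all common fields `S1 ∩ S2`. -/
def naturalJoin {Attr : Type*} {V : Attr → Type*} {S1 S2 : Set Attr}
    (D1 : Set ((a : ↥S1) → V a)) (D2 : Set ((a : ↥S2) → V a)) :
    Set (((a : ↥S1) → V a) × ((a : ↥S2) → V a)) :=
  {p | p.1 ∈ D1 ∧ p.2 ∈ D2 ∧
    restr (V := V) (Set.inter_subset_left : S1 ∩ S2 ⊆ S1) p.1 =
    restr (Set.inter_subset_right : S1 ∩ S2 ⊆ S2) p.2}

/-- Natural Join Corollary, Case A (uniqueness): if the portions of the grains inside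
the common fields are comparable, then the fields `(K1 \ S2) ∪ (K2 \ S1) ∪ (K1 ∩ K2)`
uniquely identify natural-join results. -/
theorem natural_join_grain_caseA {Attr : Type*} {V : Attr → Type*}
    {S1 S2 K1 K2 : Set Attr} (hK1 : K1 ⊆ S1) (hK2 : K2 ⊆ S2)
    {D1 : Set ((a : ↥S1) → V a)} {D2 : Set ((a : ↥S2) → V a)}
    (hg1 : Set.InjOn (restr hK1) D1) (hg2 : Set.InjOn (restr hK2) D2)
    (hcomp : K1 ∩ S2 ⊆ K2 ∩ S1 ∨ K2 ∩ S1 ⊆ K1 ∩ S2) :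
    Set.InjOn
      (fun p : ((a : ↥S1) → V a) × ((a : ↥S2) → V a) =>
        (restr (show K1 \ S2 ⊆ S1 from Set.diff_subset.trans hK1) p.1,
         restr (show K2 \ S1 ⊆ S2 from Set.diff_subset.trans hK2) p.2,
         restr (show K1 ∩ K2 ⊆ S1 from Set.inter_subset_left.trans hK1) p.1))
      (naturalJoin D1 D2) := by
  rintro ⟨r1, r2⟩ ⟨h1, h2, hj⟩ ⟨r1', r2'⟩ ⟨h1', h2', hj'⟩ heq
  simp only [Prod.mk.injEq] at heq
  obtain ⟨hd1, hd2, hk⟩ := heq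
  have agree (a : Attr) (ha1 : a ∈ S1) (ha2 : a ∈ S2) : r1 ⟨a, ha1⟩ = r2 ⟨a, ha2⟩ :=
    congrFun hj ⟨a, ha1, ha2⟩
  have agree' (a : Attr) (ha1 : a ∈ S1) (ha2 : a ∈ S2) : r1' ⟨a, ha1⟩ = r2' ⟨a, ha2⟩ :=
    congrFun hj' ⟨a, ha1, ha2⟩
  have eq_left (hS : ∀ a (ha : a ∈ K1), a ∈ S2 → r1 ⟨a, hK1 ha⟩ = r1' ⟨a, hK1 ha⟩) :
      r1 = r1' := by
    refine hg1 h1 h1' (funext fun ⟨a, ha⟩ => ?_)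
    by_cases haS : a ∈ S2
    · exact hS a ha haS
    · exact congrFun hd1 ⟨a, ha, haS⟩
  have eq_right (hS : ∀ a (ha : a ∈ K2), a ∈ S1 → r2 ⟨a, hK2 ha⟩ = r2' ⟨a, hK2 ha⟩) :
      r2 = r2' := by
    refine hg2 h2 h2' (funext fun ⟨a, ha⟩ => ?_)
    by_cases haS : a ∈ S1
    · exact hS a ha haS
    · exact congrFun hd2 ⟨a, ha, haS⟩
  rcases hcomp with hc | hc
  · obtain rfl : r1 = r1' := eq_left fun a ha haS => congrFun hk ⟨a, ha, (hc ⟨ha, haS⟩).1⟩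
    obtain rfl : r2 = r2' := eq_right fun a ha haS =>
      (agree a haS (hK2 ha)).symm.trans (agree' a haS (hK2 ha))
    rfl
  · obtain rfl : r2 = r2' := eq_right fun a ha haS =>
      (agree a haS (hK2 ha)).symm.trans
        ((congrFun hk ⟨a, (hc ⟨ha, haS⟩).1, ha⟩).trans (agree' a haS (hK2 ha)))
    obtain rfl : r1 = r1' := eq_left fun a ha haS =>
      (agree a (hK1 ha) haS).trans (agree' a (hK1 ha) haS).symm
    rfl
end

section
/- Ordered Grains Corollary, Case 1 (uniqueness): Let S1, S2, Jk be field sets with Jk ⊆ S1 and Jk ⊆ S2, let K1 ⊆ S1 be a grain of a collection D1 over S1, and let K2 ⊆ S2 be a grain of a collection D2 over S2. If the coarser grain is contained in the join key, i.e., K2 ⊆ Jk, then the map sending a join pair (r1, r2) to the restriction of r1 to K1 is injective on the equi-join of D1 and D2 on Jk; that is, the finer grain K1 alone uniquely identifies join results. -/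
/-- Ordered Grains Corollary, Case 1 (uniqueness): if the coarser grain `K2` is
contained in the join key `Jk`, then the finer grain `K1` alone uniquely identifies
equi-join results. -/
theorem ordered_grains_case1 {Attr : Type*} {V : Attr → Type*}
    {S1 S2 Jk K1 K2 : Set Attr}
    (hJ1 : Jk ⊆ S1) (hJ2 : Jk ⊆ S2) (hK1 : K1 ⊆ S1) (hK2 : K2 ⊆ S2)
    {D1 : Set ((a : ↥S1) → V a)} {D2 : Set ((a : ↥S2) → V a)}
    (hg1 : Set.InjOn (restr hK1) D1) (hg2 : Set.InjOn (restr hK2) D2)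
    (hsub : K2 ⊆ Jk) :
    Set.InjOn
      (fun p : ((a : ↥S1) → V a) × ((a : ↥S2) → V a) => restr hK1 p.1)
      (equiJoin hJ1 hJ2 D1 D2) := by
  rintro ⟨r1, r2⟩ ⟨hr1, hr2, hr⟩ ⟨s1, s2⟩ ⟨hs1, hs2, hs⟩ h
  obtain rfl : r1 = s1 := hg1 hr1 hs1 h
  have hJ : restr hJ2 r2 = restr hJ2 s2 := hr.symm.trans hs
  obtain rfl : r2 = s2 := hg2 hr2 hs2 (congrArg (restr hsub) hJ)
  rfl
end
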